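/- arXiv:2202.05646 — 2 statements merged into one kernel-verified Lean document; each statement's English description precedes it below -/
import Mathlib

section
/- Let g be a holomorphic function on the punctured unit disc 𝔻* and let c ∈ ℂ. Assume that for every θ ∈ ℝ there exists a branch L_θ of the logarithm on 𝔻 ∖ l^θ such that the map φ_θ(z) = g(z) + (c/(2πi))·L_θ(z) is injective on 𝔻 ∖ l^θ. Then for every such θ and branch L_θ, the function φ_θ has a limit in the Riemann sphere as z → 0 within 𝔻 ∖ l^θ: there exists p in the one-point compactification ℂ ∪ {∞} of ℂ such that φ_θ(z) → p as z → 0 with z ∈ 𝔻 ∖ l^θ (convergence to ∞ meaning |φ_θ(z)| → ∞). -/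
open Complex Metric Set Filter Topology

/-- The closed ray `{t·e^{iθ} : t ≥ 0} ⊆ ℂ`. -/
def lray (θ : ℝ) : Set ℂ :=
  {z : ℂ | ∃ t : ℝ, 0 ≤ t ∧ z = (t : ℂ) * Complex.exp (θ * Complex.I)}

/-!
The point is that `g` is meromorphic at `0`: then it either extends holomorphically or has a pole,
and a logarithm, unbounded but `o(1/z)`, cannot destroy the limit.

By Bloch's theorem the image of a disc of radius `r` about `z` under a holomorphic `h` contains a
disc of radius at least `r |h'(z)| / 96`. If `f` is injective on the disc and omits `w` there, then
no two values of `log (f - w)` differ by `2πi`, so `r |f'(z)| ≤ 192π |f(z) - w|`, a weak form of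
Koebe's one-quarter theorem. Let `f` be injective on the slit disc. For `z` in the half-plane
opposite to the slit the disc of radius `|z|` about `z` avoids the slit, so this estimate holds with
`r = |z|` and, for small `z`, with a fixed `w`. Grönwall's inequality along rays then gives
`f(z) = O(|z| ^ (-192π))` in that half-plane. Two opposite slits together bound `g` by a power of
`1/|z|` in a full punctured neighbourhood of `0`.
-/

lemma exists_closedBall_norm_le_two_mul {X E : Type*} [MetricSpace X] [CompleteSpace X]
    [SeminormedAddCommGroup E] {F : X → E} {c : X} {r : ℝ} (hr : 0 < r)
    (hF : ContinuousOn F (ball c r)) :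
    ∃ ρ > 0, ∃ z₀, closedBall z₀ ρ ⊆ ball c r ∧ r * ‖F c‖ ≤ 4 * (ρ * ‖F z₀‖) ∧
      ∀ z ∈ closedBall z₀ ρ, ‖F z‖ ≤ 2 * ‖F z₀‖ := by
  have hsub : closedBall c (3 * (r / 4)) ⊆ ball c r := closedBall_subset_ball (by linarith)
  have : CompleteSpace (closedBall c (3 * (r / 4))) := isClosed_closedBall.completeSpace_coe
  obtain ⟨ρ, hρ, ⟨z₀, _⟩, hρr, hz₀, hle, hbound⟩ := hofer
    (⟨c, mem_closedBall_self (by positivity)⟩ : closedBall c (3 * (r / 4))) (r / 4) (by positivity)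
    (hF.mono hsub).domRestrict.norm fun _ => norm_nonneg _
  have hball : closedBall z₀ ρ ⊆ closedBall c (3 * (r / 4)) :=
    closedBall_subset_closedBall' (by rw [Subtype.dist_eq] at hz₀; linarith)
  refine ⟨ρ, hρ, z₀, hball.trans hsub, ?_, fun z hz => hbound ⟨z, hball hz⟩ (mem_closedBall'.1 hz)⟩
  simp only [domRestrict_apply] at hle
  linarith

lemma approximatesLinearOn_of_norm_deriv_le {E : Type*} [NormedAddCommGroup E] [NormedSpace ℂ E]
    [CompleteSpace E] {f : ℂ → E} {c : ℂ} {ρ : ℝ} (hf : DifferentiableOn ℂ f (ball c ρ))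
    (hbound : ∀ z ∈ ball c ρ, ‖deriv f z‖ ≤ 2 * ‖deriv f c‖) :
    ApproximatesLinearOn f (ContinuousLinearMap.toSpanSingleton ℂ (deriv f c))
      (ball c (ρ / 6)) (‖deriv f c‖₊ / 2) := by
  intro x hx y hy
  have hρ : 0 < ρ := by linarith [pos_of_mem_ball hx]
  have hsub : ball c (ρ / 6) ⊆ ball c ρ := ball_subset_ball (by linarith)
  have hderiv : ∀ z ∈ ball c (ρ / 6), ‖deriv f z - deriv f c‖ ≤ ‖deriv f c‖ / 2 := by
    intro z hz
    have hmaps : MapsTo (deriv f) (ball c ρ) (closedBall (deriv f c) (3 * ‖deriv f c‖)) := by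
      intro w hw
      rw [mem_closedBall, dist_eq_norm]
      linarith [norm_sub_le (deriv f w) (deriv f c), hbound w hw]
    calc ‖deriv f z - deriv f c‖ ≤ 3 * ‖deriv f c‖ / ρ * dist z c := by
          rw [← dist_eq_norm]
          exact dist_le_div_mul_dist_of_mapsTo_ball (hf.deriv isOpen_ball) hmaps (hsub hz)
      _ ≤ 3 * ‖deriv f c‖ / ρ * (ρ / 6) := by gcongr; exact (mem_ball.1 hz).le
      _ = ‖deriv f c‖ / 2 := by field
  have hfderiv : ∀ z ∈ ball c (ρ / 6), HasFDerivWithinAt f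
      (ContinuousLinearMap.toSpanSingleton ℂ (deriv f z)) (ball c (ρ / 6)) z := fun z hz =>
    (hf.differentiableAt
      (isOpen_ball.mem_nhds (hsub hz))).hasDerivAt.hasFDerivAt.hasFDerivWithinAt
  refine (convex_ball c (ρ / 6)).norm_image_sub_le_of_norm_hasFDerivWithin_le'
    hfderiv (fun z hz => ?_) hy hx
  have hsingle : ContinuousLinearMap.toSpanSingleton ℂ (deriv f z) -
      ContinuousLinearMap.toSpanSingleton ℂ (deriv f c) =
        ContinuousLinearMap.toSpanSingleton ℂ (deriv f z - deriv f c) := by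
    ext
    simp
  rw [hsingle, ContinuousLinearMap.norm_toSpanSingleton]
  exact hderiv z hz

lemma closedBall_subset_image_of_norm_deriv_le {f : ℂ → ℂ} {c : ℂ} {ρ : ℝ} (hρ : 0 < ρ)
    (hf : DifferentiableOn ℂ f (ball c ρ))
    (hbound : ∀ z ∈ ball c ρ, ‖deriv f z‖ ≤ 2 * ‖deriv f c‖) :
    closedBall (f c) (ρ * ‖deriv f c‖ / 24) ⊆ f '' ball c ρ := by
  rcases eq_or_ne (deriv f c) 0 with h0 | h0
  · simpa [h0] using ⟨c, mem_ball_self hρ, rfl⟩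
  have hsub : closedBall c (ρ / 12) ⊆ ball c (ρ / 6) := closedBall_subset_ball (by linarith)
  let rightInv : (ContinuousLinearMap.toSpanSingleton ℂ (deriv f c)).NonlinearRightInverse :=
    { toFun := fun w => w / deriv f c
      nnnorm := ‖deriv f c‖₊⁻¹
      bound' := fun w => by simp [div_eq_inv_mul]
      right_inv' := fun w => by simp [h0] }
  have hsurj := (approximatesLinearOn_of_norm_deriv_le hf
    hbound).surjOn_closedBall_of_nonlinearRightInverse rightInv (by positivity) hsub
  have hradius : ((‖deriv f c‖₊⁻¹ : NNReal) : ℝ)⁻¹ - (‖deriv f c‖₊ / 2 : NNReal) =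
      ‖deriv f c‖ / 2 := by
    push_cast
    rw [inv_inv]
    ring
  simp only [rightInv, hradius] at hsurj
  rw [show ρ * ‖deriv f c‖ / 24 = ‖deriv f c‖ / 2 * (ρ / 12) by ring]
  exact hsurj.trans (image_mono (hsub.trans (ball_subset_ball (by linarith))))

theorem exists_closedBall_subset_image_ball {f : ℂ → ℂ} {c : ℂ} {r : ℝ} (hr : 0 < r)
    (hf : DifferentiableOn ℂ f (ball c r)) :
    ∃ w, closedBall w (r * ‖deriv f c‖ / 96) ⊆ f '' ball c r := by
  obtain ⟨ρ, hρ, z₀, hsub, hle, hbound⟩ :=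
    exists_closedBall_norm_le_two_mul hr (hf.deriv isOpen_ball).continuousOn
  have hsub' : ball z₀ ρ ⊆ ball c r := ball_subset_closedBall.trans hsub
  refine ⟨f z₀, (closedBall_subset_closedBall (by linarith)).trans
    ((closedBall_subset_image_of_norm_deriv_le hρ (hf.mono hsub') fun z hz =>
      hbound z (ball_subset_closedBall hz)).trans (image_mono hsub'))⟩

lemma deriv_eq_div_of_exp_eq {L f : ℂ → ℂ} {z : ℂ} (hL : DifferentiableAt ℂ L z)
    (hexp : (fun w => exp (L w)) =ᶠ[𝓝 z] f) : deriv L z = deriv f z / f z := by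
  rw [← hexp.deriv_eq, ← hexp.eq_of_nhds, deriv_cexp hL, mul_div_cancel_left₀ _ (exp_ne_zero _)]

lemma exists_differentiableOn_exp_eq {f : ℂ → ℂ} {c : ℂ} {r : ℝ}
    (hf : DifferentiableOn ℂ f (ball c r)) (hne : ∀ z ∈ ball c r, f z ≠ 0) :
    ∃ L : ℂ → ℂ, DifferentiableOn ℂ L (ball c r) ∧ ∀ z ∈ ball c r, exp (L z) = f z := by
  obtain ⟨L, hLc, hL⟩ :=
    ((hf.deriv isOpen_ball).div hf hne).isExactOn_ball.with_val_at c (log (f c))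
  have hLd : DifferentiableOn ℂ L (ball c r) := fun z hz =>
    (hL z hz).differentiableAt.differentiableWithinAt
  have hquot : ∀ z ∈ ball c r, HasDerivAt (fun z => exp (L z) / f z) 0 z := by
    intro z hz
    have hfz := (hf.differentiableAt (isOpen_ball.mem_nhds hz)).hasDerivAt
    have h0 := hne z hz
    have hdiv := (hL z hz).cexp.fun_div hfz h0
    rwa [Pi.div_apply, mul_assoc, div_mul_cancel₀ _ h0, sub_self, zero_div] at hdiv
  refine ⟨L, hLd, fun z hz => ?_⟩
  have hc : c ∈ ball c r := mem_ball_self (pos_of_mem_ball hz)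
  have hconst : exp (L z) / f z = exp (L c) / f c :=
    isOpen_ball.is_const_of_deriv_eq_zero (convex_ball c r).isPreconnected
      (fun x hx => (hquot x hx).differentiableAt.differentiableWithinAt)
      (fun x hx => (hquot x hx).deriv) hz hc
  rwa [hLc, exp_log (hne c hc), div_self (hne c hc), div_eq_one_iff_eq (hne z hz)] at hconst

theorem mul_norm_deriv_le_of_injOn_of_notMem {f : ℂ → ℂ} {c w : ℂ} {r : ℝ} (hr : 0 < r)
    (hf : DifferentiableOn ℂ f (ball c r)) (hinj : InjOn f (ball c r)) (hw : w ∉ f '' ball c r) :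
    r * ‖deriv f c‖ ≤ 192 * Real.pi * ‖f c - w‖ := by
  have hc : c ∈ ball c r := mem_ball_self hr
  have hne : ∀ z ∈ ball c r, f z - w ≠ 0 := fun z hz h => hw ⟨z, hz, sub_eq_zero.1 h⟩
  obtain ⟨L, hL, hexp⟩ := exists_differentiableOn_exp_eq (hf.sub_const w) hne
  obtain ⟨v, hv⟩ := exists_closedBall_subset_image_ball hr hL
  have hsmall : r * ‖deriv L c‖ / 96 < 2 * Real.pi := by
    by_contra! hlarge
    obtain ⟨x, hx, hxv⟩ := hv (mem_closedBall_self (by positivity))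
    obtain ⟨y, hy, hyv⟩ : v + 2 * Real.pi * I ∈ L '' ball c r :=
      hv (by simpa [abs_of_pos Real.pi_pos] using hlarge)
    have hxy : x = y := hinj hx hy <| sub_left_injective (b := w) <| by
      simp only [← hexp x hx, ← hexp y hy, hxv, hyv, exp_periodic v]
    simp [← hxy, hxv] at hyv
  have hderiv : deriv L c = deriv f c / (f c - w) := by
    rw [deriv_eq_div_of_exp_eq (hL.differentiableAt (isOpen_ball.mem_nhds hc))
      (eventuallyEq_of_mem (isOpen_ball.mem_nhds hc) hexp), deriv_sub_const]
  have hpos : 0 < ‖f c - w‖ := norm_pos_iff.2 (hne c hc)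
  rw [hderiv, norm_div, div_lt_iff₀ (by norm_num), ← mul_div_assoc, div_lt_iff₀ hpos] at hsmall
  linarith

lemma norm_le_mul_rpow_of_norm_mul_deriv_le {E : Type*} [NormedAddCommGroup E] [NormedSpace ℂ E]
    {f : ℂ → E} {u : ℂ} {K t : ℝ} (ht : 0 < t) (ht1 : t ≤ 1)
    (hf : ∀ s ∈ Ioc (0 : ℝ) 1, DifferentiableAt ℂ f (s * u))
    (hK : ∀ s ∈ Ioc (0 : ℝ) 1, ‖(s : ℂ) * u‖ * ‖deriv f (s * u)‖ ≤ K * ‖f (s * u)‖) :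
    ‖f (t * u)‖ ≤ ‖f u‖ * t ^ (-K) := by
  have hmem : ∀ x : ℝ, 0 ≤ x → Real.exp (-x) ∈ Ioc (0 : ℝ) 1 := fun x hx =>
    ⟨Real.exp_pos _, Real.exp_le_one_iff.2 (by linarith)⟩
  have hderiv : ∀ x : ℝ, 0 ≤ x → HasDerivAt (fun x : ℝ => f (Real.exp (-x) * u))
      (-(Real.exp (-x) * u) • deriv f (Real.exp (-x) * u)) x := by
    intro x hx
    have hpath : HasDerivAt (fun x : ℝ => (Real.exp (-x) : ℂ) * u) (-(Real.exp (-x) * u)) x := by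
      simpa using ((hasDerivAt_neg x).exp.ofReal_comp.mul_const u)
    exact (hf _ (hmem x hx)).hasDerivAt.scomp x hpath
  have hgronwall := norm_le_gronwallBound_of_norm_deriv_right_le (δ := ‖f u‖) (K := K) (ε := 0)
    (b := -Real.log t)
    (fun x hx => (hderiv x hx.1).continuousAt.continuousWithinAt)
    (fun x hx => (hderiv x hx.1).hasDerivWithinAt) (by simp)
    (fun x hx => by
      rw [norm_smul, norm_neg, add_zero]
      exact hK _ (hmem x hx.1)) (-Real.log t)
    (right_mem_Icc.2 (neg_nonneg.2 (Real.log_nonpos ht.le ht1)))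
  rw [gronwallBound_ε0, neg_neg, Real.exp_log ht, sub_zero] at hgronwall
  rwa [Real.rpow_def_of_pos ht, mul_neg, ← neg_mul, mul_comm (-Real.log t)]

/-- The slit disc `𝔻 ∖ l^θ`. -/
def slitDisc (θ : ℝ) : Set ℂ := ball 0 1 \ lray θ

/-- The closed half-plane bounded by the line perpendicular to `l^θ` at `0` and not containing
`e^{iθ}`, with `0` removed: near `0` it consists of the points `z` of the slit disc for which
`ball z ‖z‖` avoids the slit. -/
def farHalf (θ : ℝ) : Set ℂ := {z | z ≠ 0 ∧ (z * exp (-(θ * I))).re ≤ 0}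

open scoped ComplexOrder in
lemma mem_lray_iff {θ : ℝ} {z : ℂ} : z ∈ lray θ ↔ -(z * exp (-(θ * I))) ∉ slitPlane := by
  rw [mem_slitPlane_iff_not_le_zero, not_not, neg_nonpos, RCLike.nonneg_iff_exists_ofReal]
  simp only [lray, mem_ofPred_eq, exp_neg, ← div_eq_mul_inv, eq_div_iff (exp_ne_zero _)]
  exact exists_congr fun t => and_congr_right fun _ => eq_comm

lemma mem_slitDisc_iff {θ : ℝ} {z : ℂ} :
    z ∈ slitDisc θ ↔ ‖z‖ < 1 ∧ -(z * exp (-(θ * I))) ∈ slitPlane := by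
  rw [slitDisc, Set.mem_sdiff, mem_ball_zero_iff, mem_lray_iff, not_not]

lemma ne_zero_of_mem_slitDisc {θ : ℝ} {z : ℂ} (hz : z ∈ slitDisc θ) : z ≠ 0 := by
  rintro rfl
  simp [mem_slitDisc_iff] at hz

lemma slitDisc_eq_inter_preimage (θ : ℝ) :
    slitDisc θ = ball 0 1 ∩ (fun z => -(z * exp (-(θ * I)))) ⁻¹' slitPlane := by
  ext z
  rw [mem_slitDisc_iff, mem_inter_iff, mem_ball_zero_iff, mem_preimage]

lemma isOpen_slitDisc (θ : ℝ) : IsOpen (slitDisc θ) := by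
  rw [slitDisc_eq_inter_preimage]
  exact isOpen_ball.inter (isOpen_slitPlane.preimage (by fun_prop))

lemma neg_exp_div_two_mem_slitDisc (θ : ℝ) : -(exp (θ * I) / 2) ∈ slitDisc θ := by
  rw [mem_slitDisc_iff, neg_mul, div_mul_eq_mul_div, ← exp_add, neg_neg, add_neg_cancel, exp_zero]
  constructor
  · rw [norm_neg, norm_div, norm_exp_ofReal_mul_I]
    norm_num
  · exact mem_slitPlane_iff.2 (.inl (by norm_num))

lemma isPreconnected_slitDisc (θ : ℝ) : IsPreconnected (slitDisc θ) := by
  have hmem := neg_exp_div_two_mem_slitDisc θ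
  have hcenter : -(-(exp (θ * I) / 2) * exp (-(θ * I))) = ((1 / 2 : ℝ) : ℂ) := by
    rw [neg_mul, div_mul_eq_mul_div, ← exp_add, neg_neg, add_neg_cancel, exp_zero]
    norm_num
  have hlinear : IsLinearMap ℝ fun z : ℂ => -(z * exp (-(θ * I))) :=
    ⟨fun _ _ => by ring, fun _ _ => by simp only [smul_mul_assoc, smul_neg]⟩
  have hplane := StarConvex.is_linear_preimage (x := -(exp (θ * I) / 2))
    (hcenter ▸ starConvex_ofReal_slitPlane one_half_pos) hlinear
  have hstar := ((convex_ball 0 1).starConvex hmem.1).inter hplane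
  rw [← slitDisc_eq_inter_preimage] at hstar
  exact (hstar.isPathConnected hmem).isConnected.isPreconnected

lemma ball_norm_subset_slitDisc {θ : ℝ} {z : ℂ} (hz : z ∈ farHalf θ) (hz2 : ‖z‖ ≤ 1 / 2) :
    ball z ‖z‖ ⊆ slitDisc θ := by
  refine fun w hw => ⟨ball_subset_ball' (by rw [dist_zero_right]; linarith) hw, ?_⟩
  rintro ⟨t, ht, rfl⟩
  refine (mem_ball.1 hw).not_ge ?_
  obtain ⟨v, rfl⟩ : ∃ v, z = v * exp (θ * I) :=
    ⟨z / exp (θ * I), (div_mul_cancel₀ _ (exp_ne_zero _)).symm⟩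
  have hv : v.re ≤ 0 := by simpa [mul_assoc, ← exp_add] using hz.2
  rw [dist_eq_norm, ← sub_mul, norm_mul, norm_mul, norm_exp_ofReal_mul_I, mul_one, mul_one,
    norm_def, norm_def]
  refine Real.sqrt_le_sqrt ?_
  simp only [normSq_apply, sub_re, sub_im, ofReal_re, ofReal_im]
  nlinarith

lemma farHalf_union_farHalf_add_pi (θ : ℝ) : farHalf θ ∪ farHalf (θ + Real.pi) = {0}ᶜ := by
  ext z
  have hexp : exp (-(((θ + Real.pi : ℝ) : ℂ) * I)) = -exp (-(θ * I)) := by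
    rw [ofReal_add, add_mul, neg_add, exp_add, exp_neg (Real.pi * I), exp_pi_mul_I]
    norm_num
  simp only [farHalf, hexp, mul_neg, neg_re, mem_union, mem_ofPred_eq, ← and_or_left,
    mem_compl_singleton_iff, and_iff_left_iff_imp]
  exact fun _ => (le_total _ _).imp_right neg_nonpos.2

lemma nhdsWithin_farHalf_le (θ : ℝ) : 𝓝[farHalf θ] 0 ≤ 𝓝[slitDisc θ] 0 := by
  refine nhdsWithin_le_iff.2 ?_
  filter_upwards [self_mem_nhdsWithin, nhdsWithin_le_nhds (closedBall_mem_nhds 0 one_half_pos)]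
    with z hz hz2
  exact ball_norm_subset_slitDisc hz (mem_closedBall_zero_iff.1 hz2)
    (mem_ball_self (norm_pos_iff.2 hz.1))

lemma ofReal_mul_mem_farHalf {θ t : ℝ} {z : ℂ} (ht : 0 < t) (hz : z ∈ farHalf θ) :
    t * z ∈ farHalf θ := by
  refine ⟨mul_ne_zero (ofReal_ne_zero.2 ht.ne') hz.1, ?_⟩
  rw [mul_assoc, re_ofReal_mul]
  exact mul_nonpos_of_nonneg_of_nonpos ht.le hz.2

lemma norm_mul_norm_deriv_le_of_injOn_slitDisc {f : ℂ → ℂ} {θ : ℝ} {z : ℂ}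
    (hf : DifferentiableOn ℂ f (slitDisc θ)) (hinj : InjOn f (slitDisc θ))
    (hz : z ∈ farHalf θ) (hz4 : ‖z‖ ≤ 1 / 4) :
    ‖z‖ * ‖deriv f z‖ ≤ 192 * Real.pi * ‖f z - f (-(exp (θ * I) / 2))‖ := by
  have hsub := ball_norm_subset_slitDisc hz (by linarith)
  refine mul_norm_deriv_le_of_injOn_of_notMem (norm_pos_iff.2 hz.1) (hf.mono hsub)
    (hinj.mono hsub) ?_
  rintro ⟨x, hx, hfx⟩
  rw [hinj (hsub hx) (neg_exp_div_two_mem_slitDisc θ) hfx, mem_ball, dist_eq_norm'] at hx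
  have hle := norm_sub_norm_le (-(exp (θ * I) / 2)) z
  rw [norm_neg, norm_div, norm_exp_ofReal_mul_I, norm_sub_rev, RCLike.norm_ofNat] at hle
  linarith

lemma isBigO_norm_rpow_of_norm_mul_deriv_le {E : Type*} [NormedAddCommGroup E] [NormedSpace ℂ E]
    {f : ℂ → E} {θ r K : ℝ} (hr : 0 < r)
    (hf : ∀ z ∈ farHalf θ, ‖z‖ ≤ r → DifferentiableAt ℂ f z)
    (hK : ∀ z ∈ farHalf θ, ‖z‖ ≤ r → ‖z‖ * ‖deriv f z‖ ≤ K * ‖f z‖) :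
    f =O[𝓝[farHalf θ] 0] fun z => ‖z‖ ^ (-K) := by
  have hcompact : IsCompact (sphere (0 : ℂ) r ∩ {z | (z * exp (-(θ * I))).re ≤ 0}) :=
    (isCompact_sphere 0 r).inter_right
      (isClosed_le (by fun_prop) continuous_const)
  obtain ⟨C, hC⟩ := hcompact.exists_bound_of_continuousOn (f := f) fun u hu =>
    (hf u ⟨ne_of_mem_sphere hu.1 hr.ne', hu.2⟩
      (mem_sphere_zero_iff_norm.1 hu.1).le).continuousAt.continuousWithinAt
  refine .of_bound (C * (r⁻¹) ^ (-K)) ?_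
  filter_upwards [self_mem_nhdsWithin, nhdsWithin_le_nhds (closedBall_mem_nhds 0 hr)] with z hz hzr
  rw [mem_closedBall_zero_iff] at hzr
  have hz0 : 0 < ‖z‖ := norm_pos_iff.2 hz.1
  set u : ℂ := (r / ‖z‖ : ℝ) * z with hu
  have hzu : z = (r⁻¹ * ‖z‖ : ℝ) * u := by
    rw [hu, ← mul_assoc, ← ofReal_mul, show r⁻¹ * ‖z‖ * (r / ‖z‖) = 1 by field, ofReal_one, one_mul]
  have hu_far : u ∈ farHalf θ := ofReal_mul_mem_farHalf (by positivity) hz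
  have hu_norm : ‖u‖ = r := by
    rw [hu, norm_mul, norm_real, Real.norm_of_nonneg (by positivity), div_mul_cancel₀ _ hz0.ne']
  have hray : ∀ s ∈ Ioc (0 : ℝ) 1, (s : ℂ) * u ∈ farHalf θ ∧ ‖(s : ℂ) * u‖ ≤ r := fun s hs =>
    ⟨ofReal_mul_mem_farHalf hs.1 hu_far, by
      rw [norm_mul, norm_real, Real.norm_of_nonneg hs.1.le, hu_norm]
      exact mul_le_of_le_one_left hr.le hs.2⟩
  calc ‖f z‖ ≤ ‖f u‖ * (r⁻¹ * ‖z‖) ^ (-K) := by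
        conv_lhs => rw [hzu]
        exact norm_le_mul_rpow_of_norm_mul_deriv_le (by positivity)
          (by rwa [inv_mul_le_one₀ hr]) (fun s hs => (hf _ (hray s hs).1 (hray s hs).2))
          fun s hs => hK _ (hray s hs).1 (hray s hs).2
    _ ≤ C * (r⁻¹ * ‖z‖) ^ (-K) := by
        gcongr
        exact hC u ⟨mem_sphere_zero_iff_norm.2 hu_norm, hu_far.2⟩
    _ = C * r⁻¹ ^ (-K) * ‖‖z‖ ^ (-K)‖ := by
        rw [Real.mul_rpow (by positivity) hz0.le, Real.norm_of_nonneg (by positivity), mul_assoc]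

theorem isBigO_norm_rpow_of_injOn_slitDisc {f : ℂ → ℂ} {θ : ℝ}
    (hf : DifferentiableOn ℂ f (slitDisc θ)) (hinj : InjOn f (slitDisc θ)) :
    f =O[𝓝[farHalf θ] 0] fun z => ‖z‖ ^ (-(192 * Real.pi)) := by
  set w := f (-(exp (θ * I) / 2))
  have hsub : (fun z => f z - w) =O[𝓝[farHalf θ] 0] fun z => ‖z‖ ^ (-(192 * Real.pi)) := by
    refine isBigO_norm_rpow_of_norm_mul_deriv_le (r := 1 / 4) (by norm_num) (fun z hz hz4 => ?_)
      fun z hz hz4 => ?_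
    · have hz_mem :=
        ball_norm_subset_slitDisc hz (by linarith) (mem_ball_self (norm_pos_iff.2 hz.1))
      exact (hf.differentiableAt ((isOpen_slitDisc θ).mem_nhds hz_mem)).sub_const w
    · rw [deriv_sub_const]
      exact norm_mul_norm_deriv_le_of_injOn_slitDisc hf hinj hz hz4
  have hconst : (fun _ => w) =O[𝓝[farHalf θ] 0] fun z => ‖z‖ ^ (-(192 * Real.pi)) := by
    refine .of_bound ‖w‖ ?_
    filter_upwards [self_mem_nhdsWithin, nhdsWithin_le_nhds (closedBall_mem_nhds 0 one_pos)]
      with z hz hz1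
    rw [Real.norm_of_nonneg (by positivity)]
    exact le_mul_of_one_le_right (norm_nonneg w) <| Real.one_le_rpow_of_pos_of_le_one_of_nonpos
      (norm_pos_iff.2 hz.1) (mem_closedBall_zero_iff.1 hz1) (by linarith [Real.pi_pos])
  simpa only [sub_add_cancel] using hsub.add hconst

/-- `IsLogBranch L θ` says that `L` restricts to a branch of the logarithm on the slit disc
`𝔻 ∖ l^θ`; the values of `L` elsewhere are irrelevant. -/
structure IsLogBranch (L : ℂ → ℂ) (θ : ℝ) : Prop where
  differentiableOn : DifferentiableOn ℂ L (slitDisc θ)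
  exp_eq : ∀ z ∈ slitDisc θ, exp (L z) = z

lemma IsLogBranch.exists_eqOn_log_add_const {L : ℂ → ℂ} {θ : ℝ} (hL : IsLogBranch L θ) :
    ∃ k, EqOn L (fun z => log (-(z * exp (-(θ * I)))) + k) (slitDisc θ) := by
  have hlog : ∀ z ∈ slitDisc θ, HasDerivAt (fun z => log (-(z * exp (-(θ * I))))) z⁻¹ z := by
    intro z hz
    have hcomp := ((hasDerivAt_id z).mul_const (exp (-(θ * I)))).fun_neg.clog
      (mem_slitDisc_iff.1 hz).2
    rwa [id, one_mul, neg_div_neg_eq, div_mul_cancel_right₀ (exp_ne_zero _)] at hcomp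
  refine (isOpen_slitDisc θ).exists_eq_add_of_deriv_eq (isPreconnected_slitDisc θ)
    hL.differentiableOn (fun z hz => (hlog z hz).differentiableAt.differentiableWithinAt)
    fun z hz => ?_
  have hnhds := (isOpen_slitDisc θ).mem_nhds hz
  rw [(hlog z hz).deriv, deriv_eq_div_of_exp_eq (hL.differentiableOn.differentiableAt hnhds)
    (eventuallyEq_of_mem hnhds hL.exp_eq), deriv_id'', one_div]

lemma tendsto_norm_nhdsWithin_slitDisc (θ : ℝ) :
    Tendsto (fun z : ℂ => ‖z‖) (𝓝[slitDisc θ] 0) (𝓝[>] 0) :=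
  tendsto_norm_nhdsNE_zero.mono_left (nhdsWithin_mono 0 fun _ => ne_zero_of_mem_slitDisc)

lemma IsLogBranch.isLittleO_norm_rpow {L : ℂ → ℂ} {θ s : ℝ} (hL : IsLogBranch L θ)
    (hs : s < 0) : L =o[𝓝[slitDisc θ] 0] fun z => ‖z‖ ^ s := by
  obtain ⟨k, hk⟩ := hL.exists_eqOn_log_add_const
  have hnorm := tendsto_norm_nhdsWithin_slitDisc θ
  have hbound : L =O[𝓝[slitDisc θ] 0] fun z => |Real.log ‖z‖| + (Real.pi + ‖k‖) := by
    refine .of_norm_eventuallyLE ?_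
    filter_upwards [self_mem_nhdsWithin] with z hz
    rw [hk hz]
    refine (norm_add_le _ _).trans ?_
    rw [← add_assoc]
    gcongr
    refine (norm_le_abs_re_add_abs_im _).trans (add_le_add (le_of_eq ?_) ?_)
    · rw [log_re, norm_neg, norm_mul, ← neg_mul, ← ofReal_neg, norm_exp_ofReal_mul_I, mul_one]
    · rw [log_im]
      exact abs_arg_le_pi _
  refine hbound.trans_isLittleO (.add ?_ ?_)
  · exact ((isLittleO_log_rpow_nhdsGT_zero hs).comp_tendsto hnorm).abs_left
  · exact Asymptotics.isLittleO_const_left.2 <| .inr <|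
      tendsto_norm_atTop_atTop.comp ((tendsto_rpow_neg_nhdsGT_zero hs).comp hnorm)

lemma IsLogBranch.tendsto_cobounded {L : ℂ → ℂ} {θ : ℝ} (hL : IsLogBranch L θ) :
    Tendsto L (𝓝[slitDisc θ] 0) (Bornology.cobounded ℂ) := by
  have hexp : Tendsto (fun z => exp (L z)) (𝓝[slitDisc θ] 0) (𝓝 0) :=
    (tendsto_id.mono_left nhdsWithin_le_nhds).congr'
      (eventuallyEq_nhdsWithin_of_eqOn fun z hz => (hL.exp_eq z hz).symm)
  exact tendsto_norm_atTop_iff_cobounded.1 <|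
    tendsto_atTop_mono (fun z => abs_re_le_norm (L z)) <|
      tendsto_abs_atBot_atTop.comp (tendsto_exp_nhds_zero_iff.1 hexp)

lemma tendsto_cobounded_add_of_isLittleO {α E : Type*} [SeminormedAddCommGroup E] {l : Filter α}
    {f g : α → E} (hfg : f =o[l] g) (hg : Tendsto g l (Bornology.cobounded E)) :
    Tendsto (fun z => f z + g z) l (Bornology.cobounded E) := by
  rw [← tendsto_norm_atTop_iff_cobounded] at hg ⊢
  exact hfg.right_isTheta_add.tendsto_norm_atTop_iff.1 hg

lemma meromorphicAt_of_isBigO_norm_rpow {E : Type*} [NormedAddCommGroup E] [NormedSpace ℂ E]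
    [CompleteSpace E] {f : ℂ → E} {x : ℂ} {s : ℝ} (hf : ∀ᶠ z in 𝓝[≠] x, DifferentiableAt ℂ f z)
    (hO : f =O[𝓝[≠] x] fun z => ‖z - x‖ ^ s) : MeromorphicAt f x := by
  obtain ⟨N, hN⟩ := exists_nat_gt (max (-s) 0)
  obtain ⟨hsN, hN0⟩ := max_lt_iff.1 hN
  have hprod : (fun z => (z - x) ^ N • f z) =O[𝓝[≠] x] fun z => ‖z - x‖ ^ (N + s) := by
    have hpow : (fun z => (z - x) ^ N) =O[𝓝[≠] x] fun z => ‖z - x‖ ^ (N : ℝ) :=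
      .of_norm_eventuallyLE <| .of_forall fun z => by simp
    refine (hpow.smul hO).congr' .rfl ?_
    filter_upwards [self_mem_nhdsWithin] with z hz
    rw [smul_eq_mul, Real.rpow_add (norm_pos_iff.2 (sub_ne_zero.2 hz))]
  refine ⟨N, analyticAt_of_differentiable_on_punctured_nhds_of_continuousAt ?_ ?_⟩
  · filter_upwards [hf] with z hz
    fun_prop
  · rw [continuousAt_iff_punctured_nhds, sub_self, zero_pow (by simpa using hN0.ne'), zero_smul]
    refine hprod.trans_tendsto ?_
    have hcont : Continuous fun z => ‖z - x‖ ^ (N + s) :=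
      (by fun_prop : Continuous fun z => ‖z - x‖).rpow_const fun _ => .inr (by linarith)
    have hlim := (hcont.tendsto x).mono_left (nhdsWithin_le_nhds (s := {x}ᶜ))
    rwa [sub_self, norm_zero, Real.zero_rpow (by linarith)] at hlim

lemma isBigO_of_meromorphicOrderAt_le {𝕜 : Type*} [NontriviallyNormedField 𝕜] {f g : 𝕜 → 𝕜}
    {x : 𝕜} (hf : MeromorphicAt f x) (hg : MeromorphicAt g x)
    (hle : meromorphicOrderAt g x ≤ meromorphicOrderAt f x) : f =O[𝓝[≠] x] g := by
  rcases eq_or_ne (meromorphicOrderAt g x) ⊤ with htop | htop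
  · have hf0 : f =ᶠ[𝓝[≠] x] 0 := meromorphicOrderAt_eq_top_iff.1 (top_le_iff.1 (htop ▸ hle))
    exact hf0.trans_isBigO (Asymptotics.isBigO_zero g _)
  · have hdiv : 0 ≤ meromorphicOrderAt (f / g) x := by
      rw [div_eq_mul_inv, meromorphicOrderAt_mul hf hg.inv, meromorphicOrderAt_inv]
      lift meromorphicOrderAt g x to ℤ using htop with n
      cases h : meromorphicOrderAt f x with
      | top => simp
      | coe m =>
        rw [h] at hle
        norm_cast at hle ⊢
        lia
    obtain ⟨y, hy⟩ := tendsto_nhds_of_meromorphicOrderAt_nonneg (hf.div hg) hdiv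
    have hg0 := (meromorphicOrderAt_ne_top_iff_eventually_ne_zero hg).1 htop
    exact Asymptotics.isBigO_of_div_tendsto_nhds (hg0.mono fun z hz h => absurd h hz) y hy

lemma isBigO_inv_sub_of_meromorphicOrderAt_neg {𝕜 : Type*} [NontriviallyNormedField 𝕜]
    {g : 𝕜 → 𝕜} {x : 𝕜} (hg : meromorphicOrderAt g x < 0) :
    (fun z => (z - x)⁻¹) =O[𝓝[≠] x] g := by
  refine isBigO_of_meromorphicOrderAt_le (by fun_prop)
    (meromorphicAt_of_meromorphicOrderAt_ne_zero hg.ne) ?_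
  rw [fun_meromorphicOrderAt_inv, meromorphicOrderAt_id_sub_const]
  lift meromorphicOrderAt g x to ℤ using hg.ne_top with n
  rw [← WithTop.coe_one, ← WithTop.LinearOrderedAddCommGroup.coe_neg, WithTop.coe_le_coe]
  exact Int.le_sub_one_of_lt (WithTop.coe_lt_zero.1 hg)

theorem exists_tendsto_onePoint_add_mul_of_meromorphicAt {g L : ℂ → ℂ} {x a : ℂ} {l : Filter ℂ}
    (hg : MeromorphicAt g x) (hl : l ≤ 𝓝[≠] x) (hLo : L =o[l] fun z => (z - x)⁻¹)
    (hL : Tendsto L l (Bornology.cobounded ℂ)) :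
    ∃ p : OnePoint ℂ, Tendsto (fun z => ((g z + a * L z : ℂ) : OnePoint ℂ)) l (𝓝 p) := by
  have hinfty {F : ℂ → ℂ} (hF : Tendsto F l (Bornology.cobounded ℂ)) :
      Tendsto (fun z => (F z : OnePoint ℂ)) l (𝓝 OnePoint.infty) := by
    rw [Metric.cobounded_eq_cocompact, ← coclosedCompact_eq_cocompact] at hF
    exact OnePoint.tendsto_coe_infty.comp hF
  rcases lt_or_ge (meromorphicOrderAt g x) 0 with hpole | hregular
  · have hlittle : (fun z => a * L z) =o[l] g :=
      (hLo.const_mul_left a).trans_isBigO ((isBigO_inv_sub_of_meromorphicOrderAt_neg hpole).mono hl)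
    refine ⟨OnePoint.infty, hinfty ?_⟩
    simpa only [add_comm] using tendsto_cobounded_add_of_isLittleO hlittle
      ((tendsto_cobounded_of_meromorphicOrderAt_neg hpole).mono_left hl)
  · obtain ⟨y, hy⟩ := tendsto_nhds_of_meromorphicOrderAt_nonneg hg hregular
    rcases eq_or_ne a 0 with rfl | ha
    · refine ⟨y, (OnePoint.continuous_coe.tendsto y).comp ?_⟩
      simpa only [zero_mul, add_zero] using hy.mono_left hl
    · have haL : Tendsto (fun z => a * L z) l (Bornology.cobounded ℂ) :=
        (tendsto_mul_left_cobounded ha).comp hL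
      refine ⟨OnePoint.infty, hinfty (tendsto_cobounded_add_of_isLittleO ?_ haL)⟩
      exact ((hy.mono_left hl).isBigO_one ℝ).trans_isLittleO <|
        (Asymptotics.isLittleO_const_left.2 (.inr (tendsto_norm_atTop_iff_cobounded.2 haL)))

theorem meromorphicAt_of_injOn_slitDisc {g L₁ L₂ : ℂ → ℂ} {a : ℂ} {θ : ℝ}
    (hg : DifferentiableOn ℂ g (ball 0 1 \ {0}))
    (hL₁ : IsLogBranch L₁ θ) (hinj₁ : InjOn (fun z => g z + a * L₁ z) (slitDisc θ))
    (hL₂ : IsLogBranch L₂ (θ + Real.pi))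
    (hinj₂ : InjOn (fun z => g z + a * L₂ z) (slitDisc (θ + Real.pi))) :
    MeromorphicAt g 0 := by
  have hgrowth {φ : ℝ} {L : ℂ → ℂ} (hL : IsLogBranch L φ)
      (hinj : InjOn (fun z => g z + a * L z) (slitDisc φ)) :
      g =O[𝓝[farHalf φ] 0] fun z => ‖z‖ ^ (-(192 * Real.pi)) := by
    have hlog : (fun z => a * L z) =O[𝓝[farHalf φ] 0] fun z => ‖z‖ ^ (-(192 * Real.pi)) :=
      ((hL.isLittleO_norm_rpow (by linarith [Real.pi_pos])).isBigO.const_mul_left a).mono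
        (nhdsWithin_farHalf_le φ)
    have hdiff : DifferentiableOn ℂ (fun z => g z + a * L z) (slitDisc φ) :=
      (hg.mono fun z hz => ⟨hz.1, ne_zero_of_mem_slitDisc hz⟩).add
        (hL.differentiableOn.const_mul a)
    simpa only [add_sub_cancel_right] using
      (isBigO_norm_rpow_of_injOn_slitDisc hdiff hinj).sub hlog
  refine meromorphicAt_of_isBigO_norm_rpow (s := -(192 * Real.pi)) ?_ ?_
  · have hopen : IsOpen (ball (0 : ℂ) 1 \ {0}) := isOpen_ball.sdiff isClosed_singleton
    filter_upwards [self_mem_nhdsWithin, nhdsWithin_le_nhds (ball_mem_nhds 0 one_pos)] with z hz hz1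
    exact hg.differentiableAt (hopen.mem_nhds ⟨hz1, hz⟩)
  · simp only [sub_zero]
    rw [← farHalf_union_farHalf_add_pi θ, nhdsWithin_union]
    exact (hgrowth hL₁ hinj₁).sup (hgrowth hL₂ hinj₂)

theorem limit_exists_of_injective_branches_general {g L₁ L₂ L : ℂ → ℂ} {a : ℂ} {θ₀ θ : ℝ}
    (hg : DifferentiableOn ℂ g (ball 0 1 \ {0}))
    (hL₁ : IsLogBranch L₁ θ₀) (hinj₁ : InjOn (fun z => g z + a * L₁ z) (slitDisc θ₀))
    (hL₂ : IsLogBranch L₂ (θ₀ + Real.pi))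
    (hinj₂ : InjOn (fun z => g z + a * L₂ z) (slitDisc (θ₀ + Real.pi)))
    (hL : IsLogBranch L θ) :
    ∃ p : OnePoint ℂ,
      Tendsto (fun z => ((g z + a * L z : ℂ) : OnePoint ℂ)) (𝓝[slitDisc θ] 0) (𝓝 p) := by
  have hlittle : L =o[𝓝[slitDisc θ] 0] fun z => (z - 0)⁻¹ := by
    simpa only [sub_zero, Real.rpow_neg_one, ← norm_inv, Asymptotics.isLittleO_norm_right]
      using hL.isLittleO_norm_rpow (by norm_num : (-1 : ℝ) < 0)
  exact exists_tendsto_onePoint_add_mul_of_meromorphicAt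
    (meromorphicAt_of_injOn_slitDisc hg hL₁ hinj₁ hL₂ hinj₂)
    (nhdsWithin_mono 0 fun _ => ne_zero_of_mem_slitDisc) hlittle hL.tendsto_cobounded

/-- under the injectivity assumption on all branches
`φ_θ = g + (c/2πi)·L_θ` on `𝔻 ∖ l^θ`, every such branch has a limit in the
Riemann sphere `ℂ ∪ {∞}` (the one-point compactification of `ℂ`) as `z → 0`
within `𝔻 ∖ l^θ`. -/
theorem limit_exists_of_injective_branches
    (g : ℂ → ℂ) (c : ℂ)
    (hg : DifferentiableOn ℂ g (ball (0 : ℂ) 1 \ {0}))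
    (hyp : ∀ θ : ℝ, ∃ L : ℂ → ℂ,
      DifferentiableOn ℂ L (ball (0 : ℂ) 1 \ lray θ) ∧
      (∀ z ∈ ball (0 : ℂ) 1 \ lray θ, Complex.exp (L z) = z) ∧
      InjOn (fun z => g z + c / (2 * (Real.pi : ℂ) * Complex.I) * L z)
        (ball (0 : ℂ) 1 \ lray θ)) :
    ∀ θ : ℝ, ∀ L : ℂ → ℂ,
      DifferentiableOn ℂ L (ball (0 : ℂ) 1 \ lray θ) →
      (∀ z ∈ ball (0 : ℂ) 1 \ lray θ, Complex.exp (L z) = z) →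
      InjOn (fun z => g z + c / (2 * (Real.pi : ℂ) * Complex.I) * L z)
        (ball (0 : ℂ) 1 \ lray θ) →
      ∃ p : OnePoint ℂ,
        Tendsto
          (fun z => ((g z + c / (2 * (Real.pi : ℂ) * Complex.I) * L z : ℂ) :
            OnePoint ℂ))
          (𝓝[ball (0 : ℂ) 1 \ lray θ] 0) (𝓝 p) := by
  intro θ L hL hexp _
  obtain ⟨L₁, hL₁, hexp₁, hinj₁⟩ := hyp 0
  obtain ⟨L₂, hL₂, hexp₂, hinj₂⟩ := hyp (0 + Real.pi)
  exact limit_exists_of_injective_branches_general hg ⟨hL₁, hexp₁⟩ hinj₁ ⟨hL₂, hexp₂⟩ hinj₂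
    ⟨hL, hexp⟩
end

section
/- Let H be a holomorphic function on the punctured unit disc 𝔻* and let α ∈ ℂ. Assume that for every θ ∈ ℝ there exists a branch L_θ of the logarithm on 𝔻 ∖ l^θ such that the map z ↦ H(z)·exp(α·L_θ(z)) (a branch of H(z)·z^α) is injective on 𝔻 ∖ l^θ. Then H does not have an essential singularity at 0; that is, there exists n ∈ ℕ such that z ↦ z^n·H(z) extends holomorphically across 0. -/
open Complex Metric Set Filter Topology

/-!
Let `f` be a zero-free injective holomorphic function on a disc. By injectivity the image of
`log f` does not contain two points differing by `2πi`, so it contains no large disc, and Bloch's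
theorem bounds `f' / f` at the centre by a constant over the radius. For a branch of `H(z)·z^α` the
logarithmic derivative is `H' / H + α / z`, and injectivity leaves at most one zero off each ray, so
that `H` is zero-free near `0`. As every `z ≠ 0` is the centre of a disc of radius comparable to
`‖z‖` which avoids one of two given distinct rays, `z H'(z) / H(z)` is bounded near `0`; Grönwall's
inequality along radii then shows that `H` grows at most polynomially.
-/

section Bloch

variable {f : ℂ → ℂ} {c : ℂ} {r : ℝ}

lemma norm_deriv_div_two_mul_le_norm_sub {s : Set ℂ} {z : ℂ} (hs : Convex ℝ s)
    (hf : ∀ w ∈ s, DifferentiableAt ℂ f w)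
    (hderiv : ∀ w ∈ s, ‖deriv f w - deriv f c‖ ≤ ‖deriv f c‖ / 2) (hc : c ∈ s) (hz : z ∈ s) :
    ‖deriv f c‖ / 2 * ‖z - c‖ ≤ ‖f z - f c‖ := by
  have hlin : ‖(f z - deriv f c * z) - (f c - deriv f c * c)‖ ≤ ‖deriv f c‖ / 2 * ‖z - c‖ :=
    hs.norm_image_sub_le_of_norm_hasDerivWithin_le (f := fun w => f w - deriv f c * w)
      (fun w hw => ((hf w hw).hasDerivAt.sub
        ((hasDerivAt_id w).const_mul (deriv f c))).hasDerivWithinAt)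
      (by simpa only [mul_one] using hderiv) hc hz
  have htri := norm_sub_le (f z - f c) ((f z - deriv f c * z) - (f c - deriv f c * c))
  rw [show f z - f c - ((f z - deriv f c * z) - (f c - deriv f c * c)) = deriv f c * (z - c) by
    ring, norm_mul] at htri
  linarith

lemma ball_subset_image_of_norm_deriv_le (hf : DifferentiableOn ℂ f (ball c r))
    (hbound : ∀ z ∈ ball c r, ‖deriv f z‖ ≤ 2 * ‖deriv f c‖) :
    ball (f c) (‖deriv f c‖ * r / 24) ⊆ f '' ball c r := by
  rcases le_or_gt (‖deriv f c‖ * r) 0 with hle | hpos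
  · rw [ball_eq_empty.2 (by linarith)]
    exact empty_subset _
  have hr : 0 < r := pos_of_mul_pos_right hpos (norm_nonneg _)
  have hD : 0 < ‖deriv f c‖ := pos_of_mul_pos_left hpos hr.le
  have hsub : closedBall c (r / 6) ⊆ ball c r := closedBall_subset_ball (by linarith)
  have hdiff : ∀ z ∈ closedBall c (r / 6), DifferentiableAt ℂ f z := fun z hz =>
    hf.differentiableAt (isOpen_ball.mem_nhds (hsub hz))
  have hderiv : ∀ z ∈ closedBall c (r / 6), ‖deriv f z - deriv f c‖ ≤ ‖deriv f c‖ / 2 := by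
    have hmaps : MapsTo (deriv f) (ball c r) (closedBall (deriv f c) (3 * ‖deriv f c‖)) := by
      intro z hz
      rw [mem_closedBall_iff_norm]
      linarith [norm_sub_le (deriv f z) (deriv f c), hbound z hz]
    intro z hz
    calc ‖deriv f z - deriv f c‖
        ≤ 3 * ‖deriv f c‖ / r * ‖z - c‖ := by
          simpa only [dist_eq_norm] using
            dist_le_div_mul_dist_of_mapsTo_ball (hf.deriv isOpen_ball) hmaps (hsub hz)
      _ ≤ 3 * ‖deriv f c‖ / r * (r / 6) := by
          gcongr
          exact mem_closedBall_iff_norm.1 hz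
      _ = ‖deriv f c‖ / 2 := by field_simp; norm_num
  have hsphere : ∀ z ∈ sphere c (r / 6), ‖deriv f c‖ * r / 12 ≤ ‖f z - f c‖ := by
    intro z hz
    have hlow := norm_deriv_div_two_mul_le_norm_sub (convex_closedBall c (r / 6)) hdiff hderiv
      (mem_closedBall_self (by positivity)) (sphere_subset_closedBall hz)
    rw [mem_sphere_iff_norm.1 hz] at hlow
    linarith
  have hne : ∃ᶠ z in 𝓝 c, f z ≠ f c :=
    ((hdiff c (mem_closedBall_self (by positivity))).hasDerivAt.eventually_ne
      (norm_pos_iff.1 hD)).frequently.filter_mono nhdsWithin_le_nhds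
  have hcl : DiffContOnCl ℂ f (ball c (r / 6)) :=
    (hf.mono (closure_ball_subset_closedBall.trans hsub)).diffContOnCl
  calc ball (f c) (‖deriv f c‖ * r / 24)
      = ball (f c) (‖deriv f c‖ * r / 12 / 2) := by ring_nf
    _ ⊆ f '' closedBall c (r / 6) := hcl.ball_subset_image_closedBall (by positivity) hsphere hne
    _ ⊆ f '' ball c r := image_mono hsub

/-- **Bloch's theorem**, with a non-optimal constant. -/
theorem exists_ball_subset_image_ball (hf : DifferentiableOn ℂ f (ball c r)) (hr : 0 < r) :
    ∃ a ∈ ball c r, ball (f a) (‖deriv f c‖ * r / 96) ⊆ f '' ball c r := by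
  have hsub : closedBall c (r / 2) ⊆ ball c r := closedBall_subset_ball (by linarith)
  have hcont : ContinuousOn (fun z => (r / 2 - ‖z - c‖) * ‖deriv f z‖) (closedBall c (r / 2)) :=
    ContinuousOn.mul (by fun_prop) ((hf.deriv isOpen_ball).continuousOn.mono hsub).norm
  -- Around a maximum point of this weight, `‖f'‖` at most doubles on a disc of radius `t`.
  obtain ⟨a, ha, hmax⟩ := (isCompact_closedBall c (r / 2)).exists_isMaxOn
    ⟨c, mem_closedBall_self (by positivity)⟩ hcont
  set t := (r / 2 - ‖a - c‖) / 2 with ht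
  have hball : ∀ z ∈ ball a t, t < r / 2 - ‖z - c‖ := by
    intro z hz
    linarith [norm_sub_le_norm_sub_add_norm_sub z a c, mem_ball_iff_norm.1 hz]
  have hsubt : ball a t ⊆ closedBall c (r / 2) := by
    intro z hz
    rw [mem_closedBall_iff_norm]
    linarith [hball z hz, pos_of_mem_ball hz]
  have hbound : ∀ z ∈ ball a t, ‖deriv f z‖ ≤ 2 * ‖deriv f a‖ := by
    intro z hz
    refine le_of_mul_le_mul_left ?_ (pos_of_mem_ball hz)
    calc t * ‖deriv f z‖ ≤ (r / 2 - ‖z - c‖) * ‖deriv f z‖ := by gcongr; exact (hball z hz).le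
      _ ≤ (r / 2 - ‖a - c‖) * ‖deriv f a‖ := hmax (hsubt hz)
      _ = t * (2 * ‖deriv f a‖) := by rw [ht]; ring
  have hcentre : r / 2 * ‖deriv f c‖ ≤ (r / 2 - ‖a - c‖) * ‖deriv f a‖ := by
    simpa using hmax (mem_closedBall_self (x := c) (by positivity))
  refine ⟨a, hsub ha, ?_⟩
  calc ball (f a) (‖deriv f c‖ * r / 96)
      ⊆ ball (f a) (‖deriv f a‖ * t / 24) := ball_subset_ball (by rw [ht]; linarith)
    _ ⊆ f '' ball a t := ball_subset_image_of_norm_deriv_le (hf.mono (hsubt.trans hsub)) hbound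
    _ ⊆ f '' ball c r := image_mono (hsubt.trans hsub)

lemma exists_eqOn_smul_exp_of_ne_zero (hf : DifferentiableOn ℂ f (ball c r))
    (hne : ∀ z ∈ ball c r, f z ≠ 0) :
    ∃ g : ℂ → ℂ, (∀ z ∈ ball c r, HasDerivAt g (logDeriv f z) z) ∧
      ∃ k : ℂ, EqOn f (k • fun z => exp (g z)) (ball c r) := by
  obtain ⟨g, hg⟩ := ((hf.deriv isOpen_ball).div hf hne).isExactOn_ball
  have hexp : DifferentiableOn ℂ (fun z => exp (g z)) (ball c r) := fun z hz =>
    (hg z hz).cexp.differentiableAt.differentiableWithinAt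
  have hlog : EqOn (logDeriv f) (logDeriv fun z => exp (g z)) (ball c r) := by
    intro z hz
    rw [logDeriv_apply (fun z => exp (g z)), (hg z hz).cexp.deriv,
      mul_div_cancel_left₀ _ (exp_ne_zero _)]
    rfl
  obtain ⟨k, -, hk⟩ := (logDeriv_eqOn_iff hf hexp isOpen_ball (convex_ball c r).isPreconnected
    (fun _ _ => exp_ne_zero _) hne).1 hlog
  exact ⟨g, hg, k, hk⟩

theorem norm_logDeriv_mul_le_of_injOn (hf : DifferentiableOn ℂ f (ball c r)) (hr : 0 < r)
    (hne : ∀ z ∈ ball c r, f z ≠ 0) (hinj : InjOn f (ball c r)) :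
    ‖logDeriv f c‖ * r ≤ 192 * Real.pi := by
  obtain ⟨g, hg, k, hk⟩ := exists_eqOn_smul_exp_of_ne_zero hf hne
  obtain ⟨a, ha, himage⟩ := exists_ball_subset_image_ball
    (fun z hz => (hg z hz).differentiableAt.differentiableWithinAt) hr
  rw [(hg c (mem_ball_self hr)).deriv] at himage
  by_contra! hlt
  have hmem : g a + 2 * Real.pi * I ∈ ball (g a) (‖logDeriv f c‖ * r / 96) := by
    have hnorm : ‖(2 * Real.pi * I : ℂ)‖ = 2 * Real.pi := by simp [abs_of_pos Real.pi_pos]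
    rw [mem_ball_iff_norm, add_sub_cancel_left, hnorm]
    linarith
  obtain ⟨b, hb, hgb⟩ := himage hmem
  have hab : b = a := hinj hb ha <| by
    rw [hk hb, hk ha, Pi.smul_apply, Pi.smul_apply, hgb, exp_periodic]
  rw [hab, left_eq_add] at hgb
  exact two_pi_I_ne_zero hgb

end Bloch

section PolynomialGrowth

variable {E : Type*} [NormedAddCommGroup E] [NormedSpace ℂ E] {f : ℂ → E} {R : ℝ} {n : ℕ}

lemma pow_mul_norm_le_of_norm_mul_deriv_le (hf : DifferentiableOn ℂ f (ball 0 R \ {0}))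
    (hbound : ∀ z ∈ ball (0 : ℂ) R \ {0}, ‖z‖ * ‖deriv f z‖ ≤ n * ‖f z‖)
    {w : ℂ} (hw : w ∈ ball (0 : ℂ) R \ {0}) {t : ℝ} (ht : t ∈ Ioc 0 1) :
    t ^ n * ‖f (t * w)‖ ≤ ‖f w‖ := by
  let γ : ℝ → ℂ := fun s => (Real.exp (-s) : ℝ) * w
  have hγ : ∀ s, HasDerivAt γ (-γ s) s := fun s => by
    simpa [γ] using ((hasDerivAt_neg s).exp.ofReal_comp).mul_const w
  have hγ_mem : ∀ s, 0 ≤ s → γ s ∈ ball (0 : ℂ) R \ {0} := by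
    intro s hs
    have hnorm : ‖γ s‖ ≤ ‖w‖ := by
      rw [norm_mul, norm_real, Real.norm_of_nonneg (Real.exp_pos _).le]
      exact mul_le_of_le_one_left (norm_nonneg w) (Real.exp_le_one_iff.2 (neg_nonpos.2 hs))
    exact ⟨mem_ball_zero_iff.2 (hnorm.trans_lt (mem_ball_zero_iff.1 hw.1)),
      mul_ne_zero (ofReal_ne_zero.2 (Real.exp_ne_zero _)) hw.2⟩
  have hfγ : ∀ s, 0 ≤ s → HasDerivAt (f ∘ γ) (-γ s • deriv f (γ s)) s := fun s hs =>
    ((hf.differentiableAt ((isOpen_ball.sdiff isClosed_singleton).mem_nhds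
      (hγ_mem s hs))).hasDerivAt).scomp s (hγ s)
  have hlog : 0 ≤ -Real.log t := neg_nonneg.2 (Real.log_nonpos ht.1.le ht.2)
  have hgronwall := norm_le_gronwallBound_of_norm_deriv_right_le (f := f ∘ γ) (ε := 0) (K := n)
    (fun s hs => (hfγ s hs.1).continuousAt.continuousWithinAt)
    (fun s hs => (hfγ s hs.1).hasDerivWithinAt) le_rfl
    (fun s hs => by
      rw [add_zero, norm_smul, norm_neg]
      exact hbound _ (hγ_mem s hs.1))
    (-Real.log t) (right_mem_Icc.2 hlog)
  have hexp : Real.exp (n * -Real.log t) = (t ^ n)⁻¹ := by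
    rw [Real.exp_nat_mul, Real.exp_neg, Real.exp_log ht.1, inv_pow]
  have hpow : 0 < t ^ n := pow_pos ht.1 n
  simp only [gronwallBound_ε0, sub_zero, hexp, Function.comp_apply, γ, neg_neg, neg_zero,
    Real.exp_log ht.1, Real.exp_zero, ofReal_one, one_mul] at hgronwall
  rwa [← div_eq_mul_inv, le_div_iff₀' hpow] at hgronwall

lemma isBigO_one_of_norm_mul_deriv_le (hR : 0 < R) (hf : DifferentiableOn ℂ f (ball 0 R \ {0}))
    (hbound : ∀ z ∈ ball (0 : ℂ) R \ {0}, ‖z‖ * ‖deriv f z‖ ≤ n * ‖f z‖) :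
    (fun z => z ^ n • f z) =O[𝓝[≠] 0] (1 : ℂ → ℝ) := by
  set ρ := R / 2
  have hρ_pos : 0 < ρ := half_pos hR
  have hsphere : sphere (0 : ℂ) ρ ⊆ ball 0 R \ {0} := fun w hw =>
    ⟨sphere_subset_ball (half_lt_self hR) hw, ne_of_mem_sphere hw hρ_pos.ne'⟩
  obtain ⟨M, hM⟩ := (isCompact_sphere (0 : ℂ) ρ).exists_bound_of_continuousOn
    (hf.continuousOn.mono hsphere)
  refine Asymptotics.IsBigO.of_bound (ρ ^ n * M) ?_
  filter_upwards [mem_nhdsWithin_of_mem_nhds (ball_mem_nhds (0 : ℂ) hρ_pos), self_mem_nhdsWithin]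
    with z hz hz0
  have hz_pos : 0 < ‖z‖ := norm_pos_iff.2 hz0
  let t := ‖z‖ / ρ
  have ht : t ∈ Ioc 0 1 :=
    ⟨by positivity, (div_le_one hρ_pos).2 (mem_ball_zero_iff.1 hz).le⟩
  let w : ℂ := z / (t : ℝ)
  have hw : w ∈ sphere (0 : ℂ) ρ := by
    rw [mem_sphere_zero_iff_norm, norm_div, norm_real, Real.norm_of_nonneg ht.1.le]
    exact div_div_cancel₀ hz_pos.ne'
  have htw : t * w = z := mul_div_cancel₀ z (ofReal_ne_zero.2 ht.1.ne')
  calc ‖z ^ n • f z‖ = ρ ^ n * (t ^ n * ‖f (t * w)‖) := by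
        rw [norm_smul, norm_pow, htw, ← mul_assoc, ← mul_pow, mul_div_cancel₀ _ hρ_pos.ne']
    _ ≤ ρ ^ n * M := by
        gcongr
        exact (pow_mul_norm_le_of_norm_mul_deriv_le hf hbound (hsphere hw) ht).trans (hM w hw)
    _ = ρ ^ n * M * ‖(1 : ℂ → ℝ) z‖ := by simp

lemma differentiableOn_pow_succ_smul_of_isBigO_one [CompleteSpace E] {s : Set ℂ} (hs : s ∈ 𝓝 0)
    (hf : DifferentiableOn ℂ f (s \ {0}))
    (hO : (fun z => z ^ n • f z) =O[𝓝[≠] 0] (1 : ℂ → ℝ)) :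
    DifferentiableOn ℂ (fun z => z ^ (n + 1) • f z) s := by
  have htendsto : Tendsto (fun z : ℂ => z • z ^ n • f z) (𝓝[≠] 0) (𝓝 0) :=
    (tendsto_id.mono_left nhdsWithin_le_nhds).zero_smul_isBoundedUnder_le
      ((Asymptotics.isBigO_one_iff ℝ).1 hO)
  refine (differentiableOn_compl_singleton_and_continuousAt_iff hs).1
    ⟨(differentiableOn_id.pow _).smul hf, continuousAt_iff_punctured_nhds.2 ?_⟩
  simpa only [smul_smul, ← pow_succ', zero_pow n.succ_ne_zero, zero_smul] using htendsto

end PolynomialGrowth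

section Rays

variable {θ θ₁ θ₂ : ℝ}

lemma zero_mem_lray (θ : ℝ) : (0 : ℂ) ∈ lray θ := ⟨0, le_rfl, by simp⟩

lemma norm_sub_lt_of_mem_lray {z w : ℂ} {r : ℝ} (hw : w ∈ lray θ) (hwz : w ∈ ball z r) :
    ‖‖z‖ * exp (θ * I) - z‖ < 2 * r := by
  obtain ⟨t, ht, rfl⟩ := hw
  rw [mem_ball_iff_norm] at hwz
  have hradial : ‖‖z‖ * exp (θ * I) - t * exp (θ * I)‖ ≤ ‖t * exp (θ * I) - z‖ := by
    rw [← sub_mul, norm_mul, norm_exp_ofReal_mul_I, mul_one, ← ofReal_sub, norm_real,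
      Real.norm_eq_abs, abs_sub_comm]
    simpa [abs_of_nonneg ht] using abs_norm_sub_norm_le (t * exp (θ * I)) z
  linarith [norm_sub_le_norm_sub_add_norm_sub (‖z‖ * exp (θ * I)) (t * exp (θ * I)) z]

lemma exists_disjoint_ball_lray (hθ : exp (θ₁ * I) ≠ exp (θ₂ * I)) :
    ∃ c ∈ Ioc (0 : ℝ) 1, ∀ z : ℂ,
      Disjoint (ball z (c * ‖z‖)) (lray θ₁) ∨ Disjoint (ball z (c * ‖z‖)) (lray θ₂) := by
  set δ := ‖exp (θ₁ * I) - exp (θ₂ * I)‖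
  have hδ_pos : 0 < δ := norm_pos_iff.2 (sub_ne_zero.2 hθ)
  have hδ_le : δ ≤ 2 := by
    have := norm_sub_le (exp (θ₁ * I)) (exp (θ₂ * I))
    rw [norm_exp_ofReal_mul_I, norm_exp_ofReal_mul_I] at this
    linarith
  refine ⟨δ / 4, ⟨by positivity, by linarith⟩, fun z => ?_⟩
  by_contra! hmeet
  obtain ⟨w₁, hz₁, hw₁⟩ := not_disjoint_iff.1 hmeet.1
  obtain ⟨w₂, hz₂, hw₂⟩ := not_disjoint_iff.1 hmeet.2
  have hdist : ‖z‖ * δ = ‖‖z‖ * exp (θ₁ * I) - ‖z‖ * exp (θ₂ * I)‖ := by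
    rw [← mul_sub, norm_mul, norm_real, norm_norm]
  linarith [norm_sub_lt_of_mem_lray hw₁ hz₁, norm_sub_lt_of_mem_lray hw₂ hz₂,
    norm_sub_le_norm_sub_add_norm_sub (‖z‖ * exp (θ₁ * I)) z (‖z‖ * exp (θ₂ * I)),
    norm_sub_rev z (‖z‖ * exp (θ₂ * I))]

end Rays

/-- Some branch `z ↦ H(z)·exp(α·L(z))` of `H(z)·z^α` is injective on the slit disc `𝔻 ∖ l^θ`, where
`L` is a branch of the logarithm there. -/
def HasInjectivePowerBranch (H : ℂ → ℂ) (α : ℂ) (θ : ℝ) : Prop :=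
  ∃ L : ℂ → ℂ,
    DifferentiableOn ℂ L (ball (0 : ℂ) 1 \ lray θ) ∧
    (∀ z ∈ ball (0 : ℂ) 1 \ lray θ, exp (L z) = z) ∧
    InjOn (fun z => H z * exp (α * L z)) (ball (0 : ℂ) 1 \ lray θ)

lemma deriv_eq_inv_of_exp_eq {L : ℂ → ℂ} {z : ℂ} (hL : DifferentiableAt ℂ L z)
    (hexp : ∀ᶠ w in 𝓝 z, exp (L w) = w) : deriv L z = z⁻¹ := by
  have hmul : z * deriv L z = 1 := by
    simpa only [hexp.self_of_nhds] using
      hL.hasDerivAt.cexp.unique ((hasDerivAt_id z).congr_of_eventuallyEq hexp)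
  exact eq_inv_of_mul_eq_one_right hmul

namespace HasInjectivePowerBranch

variable {H : ℂ → ℂ} {α α₁ α₂ : ℂ} {θ θ₁ θ₂ : ℝ}

lemma subsingleton_zeros (h : HasInjectivePowerBranch H α θ) :
    {z ∈ ball (0 : ℂ) 1 \ lray θ | H z = 0}.Subsingleton := by
  obtain ⟨L, -, -, hinj⟩ := h
  rintro z ⟨hz, hHz⟩ w ⟨hw, hHw⟩
  exact hinj hz hw (by simp only [hHz, hHw, zero_mul])

lemma norm_logDeriv_add_mul_le (h : HasInjectivePowerBranch H α θ) {z : ℂ} {r : ℝ} (hr : 0 < r)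
    (hsub : ball z r ⊆ ball 0 1 \ lray θ) (hH : DifferentiableOn ℂ H (ball z r))
    (hne : ∀ w ∈ ball z r, H w ≠ 0) :
    ‖logDeriv H z + α / z‖ * r ≤ 192 * Real.pi := by
  obtain ⟨L, hL, hexp, hinj⟩ := h
  have hz : z ∈ ball z r := mem_ball_self hr
  have hLz : DifferentiableAt ℂ L z := (hL.mono hsub).differentiableAt (ball_mem_nhds z hr)
  have hL' : deriv L z = z⁻¹ := deriv_eq_inv_of_exp_eq hLz <| by
    filter_upwards [ball_mem_nhds z hr] with w hw using hexp w (hsub hw)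
  have hpow : logDeriv (fun w => exp (α * L w)) z = α / z := by
    rw [logDeriv_apply, (hLz.hasDerivAt.const_mul α).cexp.deriv, hL',
      mul_div_cancel_left₀ _ (exp_ne_zero _), div_eq_mul_inv]
  rw [← hpow, ← logDeriv_mul (g := fun w => exp (α * L w)) z (hne z hz) (exp_ne_zero _)
    (hH.differentiableAt (ball_mem_nhds z hr)) (hLz.const_mul α).cexp]
  exact norm_logDeriv_mul_le_of_injOn (hH.mul ((hL.mono hsub).const_mul α).cexp) hr
    (fun w hw => mul_ne_zero (hne w hw) (exp_ne_zero _)) (hinj.mono hsub)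

lemma norm_mul_deriv_le (h : HasInjectivePowerBranch H α θ) {z : ℂ} {c : ℝ} (hz : z ≠ 0)
    (hc : 0 < c) (hsub : ball z (c * ‖z‖) ⊆ ball 0 1 \ lray θ)
    (hH : DifferentiableOn ℂ H (ball z (c * ‖z‖))) (hne : ∀ w ∈ ball z (c * ‖z‖), H w ≠ 0) :
    ‖z‖ * ‖deriv H z‖ ≤ (192 * Real.pi / c + ‖α‖) * ‖H z‖ := by
  have hr : 0 < c * ‖z‖ := mul_pos hc (norm_pos_iff.2 hz)
  have hHz : H z ≠ 0 := hne z (mem_ball_self hr)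
  have hlog : ‖z * logDeriv H z + α‖ ≤ 192 * Real.pi / c := by
    rw [le_div_iff₀ hc]
    calc ‖z * logDeriv H z + α‖ * c = ‖logDeriv H z + α / z‖ * (c * ‖z‖) := by
          rw [show z * logDeriv H z + α = z * (logDeriv H z + α / z) by field_simp, norm_mul]
          ring
      _ ≤ 192 * Real.pi := h.norm_logDeriv_add_mul_le hr hsub hH hne
  calc ‖z‖ * ‖deriv H z‖ = ‖z * logDeriv H z + α - α‖ * ‖H z‖ := by
        rw [add_sub_cancel_right, ← norm_mul, ← norm_mul, mul_assoc, logDeriv_apply,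
          div_mul_cancel₀ _ hHz]
    _ ≤ (192 * Real.pi / c + ‖α‖) * ‖H z‖ := by
        gcongr
        exact (norm_sub_le _ _).trans (by gcongr)

lemma eventually_ne_zero (hθ : exp (θ₁ * I) ≠ exp (θ₂ * I))
    (h₁ : HasInjectivePowerBranch H α₁ θ₁) (h₂ : HasInjectivePowerBranch H α₂ θ₂) :
    ∀ᶠ z in 𝓝[≠] 0, H z ≠ 0 := by
  obtain ⟨c, hc, hdisj⟩ := exists_disjoint_ball_lray hθ
  have hfinite := h₁.subsingleton_zeros.finite.union h₂.subsingleton_zeros.finite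
  have hzero : (0 : ℂ) ∉ {z ∈ ball (0 : ℂ) 1 \ lray θ₁ | H z = 0} ∪
      {z ∈ ball (0 : ℂ) 1 \ lray θ₂ | H z = 0} := by
    simp [zero_mem_lray]
  filter_upwards [mem_nhdsWithin_of_mem_nhds (hfinite.isClosed.compl_mem_nhds hzero),
    mem_nhdsWithin_of_mem_nhds (ball_mem_nhds (0 : ℂ) one_pos), self_mem_nhdsWithin]
    with z hz hz1 hz0 hHz
  have hmem : z ∈ ball z (c * ‖z‖) := mem_ball_self (mul_pos hc.1 (norm_pos_iff.2 hz0))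
  exact hz ((hdisj z).imp (fun hd => ⟨⟨hz1, hd.notMem_of_mem_left hmem⟩, hHz⟩)
    fun hd => ⟨⟨hz1, hd.notMem_of_mem_left hmem⟩, hHz⟩)

lemma exists_norm_mul_deriv_le (hθ : exp (θ₁ * I) ≠ exp (θ₂ * I))
    (hH : DifferentiableOn ℂ H (ball 0 1 \ {0}))
    (h₁ : HasInjectivePowerBranch H α₁ θ₁) (h₂ : HasInjectivePowerBranch H α₂ θ₂) :
    ∃ R ∈ Ioc (0 : ℝ) 1, ∃ n : ℕ, ∀ z ∈ ball (0 : ℂ) R \ {0},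
      ‖z‖ * ‖deriv H z‖ ≤ n * ‖H z‖ := by
  obtain ⟨c, hc, hdisj⟩ := exists_disjoint_ball_lray hθ
  obtain ⟨ρ, hρ, hne⟩ := mem_nhdsWithin_iff.1 (eventually_ne_zero hθ h₁ h₂)
  obtain ⟨n, hn⟩ := exists_nat_ge (192 * Real.pi / c + max ‖α₁‖ ‖α₂‖)
  refine ⟨min ρ 1 / 2, ⟨by positivity, by linarith [min_le_right ρ 1]⟩, n, ?_⟩
  rintro z ⟨hz, hz0 : z ≠ 0⟩
  have hsub : ball z (c * ‖z‖) ⊆ ball 0 (min ρ 1) := ball_subset_ball' <| by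
    rw [dist_zero_right]
    linarith [mul_le_of_le_one_left (norm_nonneg z) hc.2, mem_ball_zero_iff.1 hz]
  have hbound : ∀ {α : ℂ} {θ : ℝ}, HasInjectivePowerBranch H α θ → ‖α‖ ≤ max ‖α₁‖ ‖α₂‖ →
      Disjoint (ball z (c * ‖z‖)) (lray θ) → ‖z‖ * ‖deriv H z‖ ≤ n * ‖H z‖ := by
    intro α θ h hα hd
    have hball : ball z (c * ‖z‖) ⊆ ball 0 1 := hsub.trans (ball_subset_ball (min_le_right _ _))
    have hpunctured : ∀ w ∈ ball z (c * ‖z‖), w ≠ 0 := fun w hw hw0 =>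
      hd.notMem_of_mem_left hw (hw0 ▸ zero_mem_lray θ)
    have := h.norm_mul_deriv_le hz0 hc.1 (subset_sdiff.2 ⟨hball, hd⟩)
      (hH.mono fun w hw => ⟨hball hw, hpunctured w hw⟩)
      (fun w hw => hne ⟨ball_subset_ball (min_le_left _ _) (hsub hw), hpunctured w hw⟩)
    exact this.trans (by gcongr; linarith)
  exact (hdisj z).elim (hbound h₁ (le_max_left _ _)) (hbound h₂ (le_max_right _ _))

end HasInjectivePowerBranch

theorem no_essential_singularity_of_injective_power_branches_general
    {H : ℂ → ℂ} {α₁ α₂ : ℂ} {θ₁ θ₂ : ℝ} (hθ : exp (θ₁ * I) ≠ exp (θ₂ * I))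
    (hH : DifferentiableOn ℂ H (ball (0 : ℂ) 1 \ {0}))
    (h₁ : HasInjectivePowerBranch H α₁ θ₁) (h₂ : HasInjectivePowerBranch H α₂ θ₂) :
    ∃ n : ℕ, ∃ G : ℂ → ℂ, DifferentiableOn ℂ G (ball (0 : ℂ) 1) ∧
      ∀ z ∈ ball (0 : ℂ) 1 \ {0}, G z = z ^ n * H z := by
  obtain ⟨R, hR, n, hbound⟩ := HasInjectivePowerBranch.exists_norm_mul_deriv_le hθ hH h₁ h₂
  have hO : (fun z => z ^ n • H z) =O[𝓝[≠] 0] (1 : ℂ → ℝ) :=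
    isBigO_one_of_norm_mul_deriv_le hR.1
      (hH.mono (sdiff_subset_sdiff_left (ball_subset_ball hR.2))) hbound
  exact ⟨n + 1, fun z => z ^ (n + 1) * H z,
    differentiableOn_pow_succ_smul_of_isBigO_one (ball_mem_nhds 0 one_pos) hH hO, fun _ _ => rfl⟩

/-- if for every `θ` some branch `z ↦ H(z)·z^α = H(z)·exp(α·L_θ(z))`
is injective on `𝔻 ∖ l^θ`, then `H` has no essential singularity at `0`, i.e.
`z^n·H(z)` extends holomorphically across `0` for some `n`. -/
theorem no_essential_singularity_of_injective_power_branches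
    (H : ℂ → ℂ) (α : ℂ)
    (hH : DifferentiableOn ℂ H (ball (0 : ℂ) 1 \ {0}))
    (hyp : ∀ θ : ℝ, ∃ L : ℂ → ℂ,
      DifferentiableOn ℂ L (ball (0 : ℂ) 1 \ lray θ) ∧
      (∀ z ∈ ball (0 : ℂ) 1 \ lray θ, Complex.exp (L z) = z) ∧
      InjOn (fun z => H z * Complex.exp (α * L z)) (ball (0 : ℂ) 1 \ lray θ)) :
    ∃ n : ℕ, ∃ G : ℂ → ℂ, DifferentiableOn ℂ G (ball (0 : ℂ) 1) ∧
      ∀ z ∈ ball (0 : ℂ) 1 \ {0}, G z = z ^ n * H z := by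
  have hθ : exp ((0 : ℝ) * I) ≠ exp (Real.pi * I) := by
    rw [ofReal_zero, zero_mul, exp_zero, exp_pi_mul_I]
    norm_num
  exact no_essential_singularity_of_injective_power_branches_general hθ hH (hyp 0) (hyp Real.pi)
end
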